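/- arXiv:1104.2953 — 2 statements merged into one kernel-verified Lean document; each statement's English description precedes it below -/
import Mathlib

section
/- There exists a continuous ℂ-linear map θ from the Hilbert space ℓ²(E) = lp (fun _ : E => ℂ) 2 into the bounded operators H →L[ℂ] H such that: (i) θ (lp.single 2 i 1) = u i for every i : E; (ii) ‖a‖ ≤ ‖θ a‖ ≤ √2 · ‖a‖ for every a ∈ ℓ²(E); (iii) θ a is a compact operator for every a ∈ ℓ²(E); (iv) θ is multiplicative with respect to pointwise products: for all a, b ∈ ℓ²(E), the pointwise product function (fun i => a i * b i) is again in ℓ²(E), and θ of this product equals (θ a) ∘L (θ b). In particular, θ is injective and has closed range, so ℓ²(E) with pointwise multiplication is isomorphic as a Banach algebra to a closed subalgebra of B(H). -/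
/-!
Let `S : ℓ^p(Option E) → ℓ^∞(E)` be `(S x) i = x none + x (some i)`, let
`J : ℓ^p(E) → ℓ^p(Option E)` be extension by zero, and let `D a : ℓ^∞(E) → ℓ^p(E)` be
multiplication by `a ∈ ℓ^p(E)`. Then `θ a = J ∘ D a ∘ S`. Since `S ∘ J` is the inclusion
`ℓ^p(E) ⊆ ℓ^∞(E)`, we get `θ a ∘ θ b = J ∘ D a ∘ D b ∘ S = θ (a * b)`, reading `D b` as a map
into `ℓ^∞(E)`. The upper bound on `‖θ a‖` comes from convexity of `t ↦ t ^ p` applied to two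
coordinates, giving `‖S‖ ≤ 2 ^ (1 - 1 / p)`, and the lower bound comes from `θ a δ_none = J a`.
Each `θ (single i c)` has rank at most one, so for `p < ∞` every `θ a` is a norm limit of
finite-rank operators.
-/

open scoped ENNReal NNReal lp

section ExtendByZero

variable {ι κ V : Type*} [NormedAddCommGroup V] {p : ℝ≥0∞}

theorem norm_rpow_extend_zero (f : ι → κ) (a : ι → V) {r : ℝ} (hr : r ≠ 0) :
    (fun k => ‖Function.extend f a 0 k‖ ^ r) = Function.extend f (fun i => ‖a i‖ ^ r) 0 := by
  funext k
  simp [Function.apply_extend (fun v : V => ‖v‖ ^ r), Function.comp_def, Real.zero_rpow hr,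
    Pi.zero_def]

theorem norm_extend_zero_le {f : ι → κ} (hf : f.Injective) {a : ι → V} {C : ℝ} (hC : 0 ≤ C)
    (ha : ∀ i, ‖a i‖ ≤ C) (k : κ) : ‖Function.extend f a 0 k‖ ≤ C := by
  by_cases hk : ∃ i, f i = k
  · obtain ⟨i, rfl⟩ := hk
    simpa [hf.extend_apply] using ha i
  · simpa [Function.extend_apply' _ _ _ hk] using hC

theorem memℓp_extend_zero {f : ι → κ} (hf : f.Injective) {a : ι → V} (ha : Memℓp a p) :
    Memℓp (Function.extend f a 0) p := by
  obtain rfl | rfl | hp := p.trichotomy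
  · refine memℓp_zero ((ha.finite_dsupport.image f).subset fun k hk => ?_)
    obtain ⟨i, rfl⟩ : ∃ i, f i = k := by
      by_contra h
      exact hk (Function.extend_apply' _ _ _ h)
    exact ⟨i, by simpa [hf.extend_apply] using hk, rfl⟩
  · obtain ⟨C, hC⟩ := ha.bddAbove
    refine memℓp_infty ⟨max C 0, Set.forall_mem_range.2 ?_⟩
    exact norm_extend_zero_le hf (le_max_right _ _)
      fun i => (hC (Set.mem_range_self i)).trans (le_max_left _ _)
  · refine memℓp_gen ?_
    rw [norm_rpow_extend_zero f a hp.ne', summable_extend_zero hf]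
    exact ha.summable hp

theorem norm_eq_of_coe_eq_extend_zero [Fact (1 ≤ p)] {f : ι → κ} (hf : f.Injective)
    {a : ℓ^p(ι, V)} {b : ℓ^p(κ, V)} (hb : ⇑b = Function.extend f a 0) : ‖b‖ = ‖a‖ := by
  obtain rfl | hp := p.dichotomy
  · refine le_antisymm (lp.norm_le_of_forall_le (norm_nonneg a) fun k => ?_)
      (lp.norm_le_of_forall_le (norm_nonneg b) fun i => ?_)
    · rw [hb]
      exact norm_extend_zero_le hf (norm_nonneg a) (lp.norm_apply_le_norm ENNReal.top_ne_zero a) k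
    · simpa [hb, hf.extend_apply] using lp.norm_apply_le_norm ENNReal.top_ne_zero b (f i)
  · have hp₀ : 0 < p.toReal := zero_lt_one.trans_le hp
    rw [lp.norm_eq_tsum_rpow hp₀, lp.norm_eq_tsum_rpow hp₀, hb,
      norm_rpow_extend_zero f a hp₀.ne', tsum_extend_zero hf]

variable (𝕜 : Type*) [NormedField 𝕜] [NormedSpace 𝕜 V] [Fact (1 ≤ p)]

/-- Extension by zero along an embedding of index sets, as a linear isometry of `ℓ^p` spaces. -/
noncomputable def extendByZeroₗᵢ (f : ι ↪ κ) : ℓ^p(ι, V) →ₗᵢ[𝕜] ℓ^p(κ, V) where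
  toFun a := ⟨Function.extend f a 0, memℓp_extend_zero f.injective (lp.memℓp a)⟩
  map_add' a b := by
    have h := Function.extend_add f a b 0 0
    rw [add_zero] at h
    exact lp.ext h
  map_smul' c a := lp.ext <| by simpa using Function.extend_smul c f a 0
  norm_map' _ := norm_eq_of_coe_eq_extend_zero f.injective rfl

theorem coe_extendByZeroₗᵢ (f : ι ↪ κ) (a : ℓ^p(ι, V)) :
    ⇑(extendByZeroₗᵢ 𝕜 f a) = Function.extend f a 0 := rfl

@[simp]
theorem extendByZeroₗᵢ_apply_apply (f : ι ↪ κ) (a : ℓ^p(ι, V)) (i : ι) :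
    extendByZeroₗᵢ 𝕜 f a (f i) = a i :=
  f.injective.extend_apply _ _ _

@[simp]
theorem extendByZeroₗᵢ_some_apply_some (a : ℓ^p(ι, V)) (i : ι) :
    extendByZeroₗᵢ 𝕜 .some a (some i) = a i :=
  extendByZeroₗᵢ_apply_apply 𝕜 .some a i

@[simp]
theorem extendByZeroₗᵢ_some_apply_none (a : ℓ^p(ι, V)) : extendByZeroₗᵢ 𝕜 .some a none = 0 :=
  Function.extend_apply' _ _ _ (by simp)

theorem extendByZeroₗᵢ_single [DecidableEq ι] [DecidableEq κ] (f : ι ↪ κ) (i : ι) (v : V) :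
    extendByZeroₗᵢ 𝕜 f (lp.single p i v) = lp.single p (f i) v := by
  ext k
  by_cases hk : ∃ j, f j = k
  · obtain ⟨j, rfl⟩ := hk
    simp [Pi.single_apply]
  · rw [coe_extendByZeroₗᵢ, Function.extend_apply' _ _ _ hk,
      lp.single_apply_ne _ _ _ fun h => hk ⟨i, h.symm⟩, Pi.zero_apply]

end ExtendByZero

section NoneAddSome

variable {ι V : Type*} [NormedAddCommGroup V] {p : ℝ≥0∞} [Fact (1 ≤ p)]

theorem add_rpow_le_two_rpow_mul_add_rpow {a b r : ℝ} (ha : 0 ≤ a) (hb : 0 ≤ b) (hr : 1 ≤ r) :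
    (a + b) ^ r ≤ 2 ^ (r - 1) * (a ^ r + b ^ r) := by
  lift a to ℝ≥0 using ha
  lift b to ℝ≥0 using hb
  exact_mod_cast NNReal.rpow_add_le_mul_rpow_add_rpow a b hr

/-- For `p = ∞`, where `p.toReal = 0`, the constant is `2 ^ (1 - 1 / 0) = 2`. -/
theorem norm_apply_add_apply_le (x : ℓ^p(ι, V)) {i j : ι} (hij : i ≠ j) :
    ‖x i + x j‖ ≤ 2 ^ (1 - 1 / p.toReal) * ‖x‖ := by
  classical
  obtain rfl | hp := p.dichotomy
  · have hx (k : ι) : ‖x k‖ ≤ ‖x‖ := lp.norm_apply_le_norm ENNReal.top_ne_zero x k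
    simpa [two_mul] using norm_add_le_of_le (hx i) (hx j)
  have hp₀ : 0 < p.toReal := zero_lt_one.trans_le hp
  have two_coordinates : ‖x i‖ ^ p.toReal + ‖x j‖ ^ p.toReal ≤ ‖x‖ ^ p.toReal := by
    simpa [Finset.sum_pair hij] using lp.sum_rpow_le_norm_rpow hp₀ x {i, j}
  rw [← Real.rpow_le_rpow_iff (norm_nonneg _) (by positivity) hp₀]
  calc ‖x i + x j‖ ^ p.toReal
      ≤ (‖x i‖ + ‖x j‖) ^ p.toReal := by gcongr; exact norm_add_le _ _
    _ ≤ 2 ^ (p.toReal - 1) * (‖x i‖ ^ p.toReal + ‖x j‖ ^ p.toReal) :=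
      add_rpow_le_two_rpow_mul_add_rpow (norm_nonneg _) (norm_nonneg _) hp
    _ ≤ 2 ^ (p.toReal - 1) * ‖x‖ ^ p.toReal := by gcongr
    _ = (2 ^ (1 - 1 / p.toReal) * ‖x‖) ^ p.toReal := by
      rw [Real.mul_rpow (by positivity) (norm_nonneg _), ← Real.rpow_mul zero_le_two, sub_mul,
        one_div_mul_cancel hp₀.ne', one_mul]

variable (𝕜 : Type*) [NontriviallyNormedField 𝕜] [NormedSpace 𝕜 V]

/-- The operator `ℓ^p(Option ι) → ℓ^∞(ι)` adding the coordinate at the adjoined point to every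
other coordinate. -/
noncomputable def noneAddSomeCLM : ℓ^p(Option ι, V) →L[𝕜] ℓ^∞(ι, V) :=
  LinearMap.mkContinuous
    { toFun x := ⟨fun i => x none + x (some i), memℓp_infty
        ⟨_, Set.forall_mem_range.2 fun i => norm_apply_add_apply_le x (Option.some_ne_none i).symm⟩⟩
      map_add' x y := by ext i; exact add_add_add_comm _ _ _ _
      map_smul' c x := by ext i; exact (smul_add _ _ _).symm }
    (2 ^ (1 - 1 / p.toReal))
    fun x => lp.norm_le_of_forall_le (by positivity)
      fun i => norm_apply_add_apply_le x (Option.some_ne_none i).symm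

@[simp]
theorem noneAddSomeCLM_apply (x : ℓ^p(Option ι, V)) (i : ι) :
    noneAddSomeCLM 𝕜 x i = x none + x (some i) := rfl

theorem norm_noneAddSomeCLM_le :
    ‖(noneAddSomeCLM 𝕜 : ℓ^p(Option ι, V) →L[𝕜] ℓ^∞(ι, V))‖ ≤ 2 ^ (1 - 1 / p.toReal) :=
  LinearMap.mkContinuous_norm_le _ (by positivity) _

theorem noneAddSomeCLM_extendByZeroₗᵢ_some_apply (a : ℓ^p(ι, V)) (i : ι) :
    noneAddSomeCLM 𝕜 (extendByZeroₗᵢ 𝕜 .some a) i = a i := by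
  simp

end NoneAddSome

section Compact

variable {𝕜 X Y : Type*} [NontriviallyNormedField 𝕜] [NormedAddCommGroup X] [NormedSpace 𝕜 X]
  [NormedAddCommGroup Y] [NormedSpace 𝕜 Y]

theorem isCompactOperator_smulRight [LocallyCompactSpace 𝕜] (φ : X →L[𝕜] 𝕜) (y : Y) :
    IsCompactOperator (φ.smulRight y) :=
  (isCompactOperator_of_locallyCompactSpace_dom φ).clm_comp (.toSpanSingleton 𝕜 y)

theorem isCompactOperator_of_forall_single [CompleteSpace Y] {ι : Type*} [DecidableEq ι]
    {V : ι → Type*} [∀ i, NormedAddCommGroup (V i)] [∀ i, NormedSpace 𝕜 (V i)] {p : ℝ≥0∞}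
    [Fact (1 ≤ p)] (hp : p ≠ ∞) (T : lp V p →L[𝕜] X →L[𝕜] Y)
    (hT : ∀ i v, IsCompactOperator (T (lp.single p i v))) (a : lp V p) :
    IsCompactOperator (T a) :=
  isCompactOperator_of_tendsto (T.hasSum (lp.hasSum_single hp a)) <| .of_forall fun _ =>
    sum_mem (S := compactOperator (RingHom.id 𝕜) X Y) fun i _ => hT i (a i)

end Compact

section PointwiseEmbedding

variable (𝕜 : Type*) {E : Type*} [RCLike 𝕜] {p : ℝ≥0∞} [Fact (1 ≤ p)]

/-- Pointwise multiplication `ℓ^p × ℓ^∞ → ℓ^p`: the diagonal operator `ℓ^∞ → ℓ^p` with a given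
`ℓ^p` sequence on its diagonal. -/
noncomputable def diagonalCLM : ℓ^p(E, 𝕜) →L[𝕜] ℓ^∞(E, 𝕜) →L[𝕜] ℓ^p(E, 𝕜) :=
  lp.holderL p (fun _ => .mul 𝕜 𝕜) (K := 1) fun _ => ContinuousLinearMap.opNorm_mul_le 𝕜 𝕜

@[simp]
theorem diagonalCLM_apply_apply (a : ℓ^p(E, 𝕜)) (y : ℓ^∞(E, 𝕜)) (i : E) :
    diagonalCLM 𝕜 a y i = a i * y i := rfl

theorem norm_diagonalCLM_le :
    ‖(diagonalCLM 𝕜 : ℓ^p(E, 𝕜) →L[𝕜] ℓ^∞(E, 𝕜) →L[𝕜] ℓ^p(E, 𝕜))‖ ≤ 1 :=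
  lp.norm_holderL_le p _ _

/-- The map `θ : ℓ^p(E) → B(ℓ^p(Option E))` given by `θ a = J ∘ D a ∘ S`, where
`S = noneAddSomeCLM`, `D = diagonalCLM` and `J` is extension by zero along `some`. -/
noncomputable def pointwiseEmbedding :
    ℓ^p(E, 𝕜) →L[𝕜] ℓ^p(Option E, 𝕜) →L[𝕜] ℓ^p(Option E, 𝕜) :=
  (extendByZeroₗᵢ 𝕜 .some).toContinuousLinearMap.postcomp _ ∘L
    (noneAddSomeCLM 𝕜).precomp _ ∘L diagonalCLM 𝕜

theorem pointwiseEmbedding_apply (a : ℓ^p(E, 𝕜)) (x : ℓ^p(Option E, 𝕜)) :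
    pointwiseEmbedding 𝕜 a x =
      extendByZeroₗᵢ 𝕜 .some (diagonalCLM 𝕜 a (noneAddSomeCLM 𝕜 x)) := rfl

theorem pointwiseEmbedding_single [DecidableEq E] (i : E) (c : 𝕜) (x : ℓ^p(Option E, 𝕜)) :
    pointwiseEmbedding 𝕜 (lp.single p i c) x =
      (x none + x (some i)) • lp.single p (some i) c := by
  have h : diagonalCLM 𝕜 (lp.single p i c) (noneAddSomeCLM 𝕜 x) =
      (x none + x (some i)) • lp.single p i c := by
    ext j
    obtain rfl | hj := eq_or_ne j i
    · simp [mul_comm]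
    · simp [hj]
  rw [pointwiseEmbedding_apply, h, map_smul, extendByZeroₗᵢ_single, Function.Embedding.some_apply]

theorem pointwiseEmbedding_single_none [DecidableEq E] (a : ℓ^p(E, 𝕜)) :
    pointwiseEmbedding 𝕜 a (lp.single p none 1) = extendByZeroₗᵢ 𝕜 .some a := by
  have h : diagonalCLM 𝕜 a (noneAddSomeCLM 𝕜 (lp.single p none 1)) = a := by
    ext i
    simp
  rw [pointwiseEmbedding_apply, h]

theorem norm_le_norm_pointwiseEmbedding (a : ℓ^p(E, 𝕜)) : ‖a‖ ≤ ‖pointwiseEmbedding 𝕜 a‖ := by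
  classical
  have norm_single : ‖(lp.single p none 1 : ℓ^p(Option E, 𝕜))‖ = 1 := by
    rw [lp.norm_single (zero_lt_one.trans_le Fact.out), norm_one]
  simpa [pointwiseEmbedding_single_none, norm_single] using
    (pointwiseEmbedding 𝕜 a).le_opNorm (lp.single p none 1)

theorem norm_pointwiseEmbedding_le (a : ℓ^p(E, 𝕜)) :
    ‖pointwiseEmbedding 𝕜 a‖ ≤ 2 ^ (1 - 1 / p.toReal) * ‖a‖ := by
  refine ContinuousLinearMap.opNorm_le_bound _ (by positivity) fun x => ?_
  have norm_noneAddSome : ‖noneAddSomeCLM 𝕜 x‖ ≤ 2 ^ (1 - 1 / p.toReal) * ‖x‖ :=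
    ContinuousLinearMap.le_of_opNorm_le _ (norm_noneAddSomeCLM_le 𝕜) x
  calc ‖pointwiseEmbedding 𝕜 a x‖
      = ‖diagonalCLM 𝕜 a (noneAddSomeCLM 𝕜 x)‖ := by
        rw [pointwiseEmbedding_apply, LinearIsometry.norm_map]
    _ ≤ 1 * ‖a‖ * (2 ^ (1 - 1 / p.toReal) * ‖x‖) :=
      ContinuousLinearMap.le_of_opNorm₂_le_of_le _ (norm_diagonalCLM_le 𝕜) le_rfl norm_noneAddSome
    _ = 2 ^ (1 - 1 / p.toReal) * ‖a‖ * ‖x‖ := by ring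

theorem isCompactOperator_pointwiseEmbedding (hp : p ≠ ∞) (a : ℓ^p(E, 𝕜)) :
    IsCompactOperator (pointwiseEmbedding 𝕜 a) := by
  classical
  refine isCompactOperator_of_forall_single hp (pointwiseEmbedding 𝕜) (fun i c => ?_) a
  have rank_one : pointwiseEmbedding 𝕜 (lp.single p i c) =
      (lp.evalCLM 𝕜 _ ∞ i ∘L noneAddSomeCLM 𝕜).smulRight (lp.single p (some i) c) :=
    ContinuousLinearMap.ext (pointwiseEmbedding_single 𝕜 i c)
  rw [rank_one]
  exact isCompactOperator_smulRight _ _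

theorem pointwiseEmbedding_eq_comp {a b ab : ℓ^p(E, 𝕜)} (hab : ∀ i, ab i = a i * b i) :
    pointwiseEmbedding 𝕜 ab = pointwiseEmbedding 𝕜 a ∘L pointwiseEmbedding 𝕜 b := by
  ext1 x
  have h : diagonalCLM 𝕜 ab (noneAddSomeCLM 𝕜 x) =
      diagonalCLM 𝕜 a (noneAddSomeCLM 𝕜 (pointwiseEmbedding 𝕜 b x)) := by
    ext i
    simp only [diagonalCLM_apply_apply, pointwiseEmbedding_apply,
      noneAddSomeCLM_extendByZeroₗᵢ_some_apply, hab, mul_assoc]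
  rw [ContinuousLinearMap.comp_apply, pointwiseEmbedding_apply, h, ← pointwiseEmbedding_apply]

end PointwiseEmbedding

theorem exists_banach_algebra_embedding_general {𝕜 E : Type*} [RCLike 𝕜] [DecidableEq E]
    {p : ℝ≥0∞} [Fact (1 ≤ p)] (hp : p ≠ ∞)
    (u : E → ℓ^p(Option E, 𝕜) →L[𝕜] ℓ^p(Option E, 𝕜))
    (hu : ∀ i x, u i x = (x none + x (some i)) • lp.single p (some i) (1 : 𝕜)) :
    ∃ θ : ℓ^p(E, 𝕜) →L[𝕜] ℓ^p(Option E, 𝕜) →L[𝕜] ℓ^p(Option E, 𝕜),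
      (∀ i, θ (lp.single p i (1 : 𝕜)) = u i) ∧
      (∀ a, ‖a‖ ≤ ‖θ a‖ ∧ ‖θ a‖ ≤ 2 ^ (1 - 1 / p.toReal) * ‖a‖) ∧
      (∀ a, IsCompactOperator (θ a)) ∧
      (∀ a b : ℓ^p(E, 𝕜), Memℓp (fun i => a i * b i) p) ∧
      ∀ a b ab : ℓ^p(E, 𝕜), (∀ i, ab i = a i * b i) → θ ab = θ a ∘L θ b := by
  refine ⟨pointwiseEmbedding 𝕜, fun i => ?_,
    fun a => ⟨norm_le_norm_pointwiseEmbedding 𝕜 a, norm_pointwiseEmbedding_le 𝕜 a⟩,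
    isCompactOperator_pointwiseEmbedding 𝕜 hp, fun a b => ?_,
    fun _ _ _ => pointwiseEmbedding_eq_comp 𝕜⟩
  · ext1 x
    rw [pointwiseEmbedding_single, hu]
  · exact (lp.memℓp (diagonalCLM 𝕜 a ⟨b, (lp.memℓp b).of_exponent_ge le_top⟩) :)

/-- There is a continuous linear map `θ : ℓ²(E) → B(H)`, `H = ℓ²(Option E)`, sending the
standard basis vector at `i` to `u i`, satisfying `‖a‖ ≤ ‖θ a‖ ≤ √2 ‖a‖`, taking values in the
compact operators, and multiplicative for pointwise products.  In particular `θ` is an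
isomorphism of Banach algebras from `ℓ²(E)` (with pointwise product) onto a closed subalgebra
of `B(H)`. -/
theorem exists_banach_algebra_embedding {E : Type*} [DecidableEq E]
    (u : E → (lp (fun _ : Option E => ℂ) 2 →L[ℂ] lp (fun _ : Option E => ℂ) 2))
    (hu : ∀ (i : E) (x : lp (fun _ : Option E => ℂ) 2),
      u i x = (x none + x (some i)) • lp.single 2 (some i) (1 : ℂ)) :
    ∃ θ : lp (fun _ : E => ℂ) 2 →L[ℂ]
        (lp (fun _ : Option E => ℂ) 2 →L[ℂ] lp (fun _ : Option E => ℂ) 2),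
      (∀ i : E, θ (lp.single 2 i (1 : ℂ)) = u i) ∧
      (∀ a : lp (fun _ : E => ℂ) 2, ‖a‖ ≤ ‖θ a‖ ∧ ‖θ a‖ ≤ Real.sqrt 2 * ‖a‖) ∧
      (∀ a : lp (fun _ : E => ℂ) 2, IsCompactOperator ⇑(θ a)) ∧
      (∀ a b : lp (fun _ : E => ℂ) 2, Memℓp (fun i => a i * b i) 2) ∧
      (∀ a b ab : lp (fun _ : E => ℂ) 2,
        (∀ i, ab i = a i * b i) → θ ab = (θ a).comp (θ b)) := by
  have sqrt_two : √2 = 2 ^ (1 - 1 / (2 : ℝ≥0∞).toReal) := by norm_num [Real.sqrt_eq_rpow]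
  simpa only [sqrt_two] using exists_banach_algebra_embedding_general ENNReal.ofNat_ne_top u hu
end

section
/- Let H be a complex Hilbert space and let p : H →L[ℂ] H be an idempotent operator (p.comp p = p) with ‖p‖ ≤ 1. Then p is self-adjoint; that is, every contractive idempotent on a Hilbert space is an orthogonal projection. -/
/-! The range of a contractive idempotent `p` is orthogonal to its kernel: for `u` in the range and
`w` in the kernel, `p (u - w) = u`, so `‖u‖ ≤ ‖u - w‖`. Thus `0` is the point of the kernel nearest
to `u`, which is to say that `u` is orthogonal to the kernel. -/

section InnerProductSpace

variable {𝕜 E : Type*} [RCLike 𝕜] [NormedAddCommGroup E] [InnerProductSpace 𝕜 E]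

theorem mem_orthogonal_iff_forall_norm_le_norm_sub {K : Submodule 𝕜 E} {u : E} :
    u ∈ Kᗮ ↔ ∀ w ∈ K, ‖u‖ ≤ ‖u - w‖ := by
  have bddBelow : BddBelow (Set.range fun w : K ↦ ‖u - w‖) :=
    ⟨0, Set.forall_mem_range.2 fun _ ↦ norm_nonneg _⟩
  have iInf_le : ⨅ w : K, ‖u - w‖ ≤ ‖u‖ := by
    simpa only [ZeroMemClass.coe_zero, sub_zero] using ciInf_le bddBelow 0
  calc
    u ∈ Kᗮ ↔ ‖u‖ = ⨅ w : K, ‖u - w‖ := by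
      simpa only [sub_zero, Submodule.mem_orthogonal'] using
        (K.norm_eq_iInf_iff_inner_eq_zero (u := u) K.zero_mem).symm
    _ ↔ ‖u‖ ≤ ⨅ w : K, ‖u - w‖ := iInf_le.ge_iff_eq'.symm
    _ ↔ ∀ w ∈ K, ‖u‖ ≤ ‖u - w‖ := by rw [le_ciInf_iff bddBelow, Subtype.forall]

theorem isOrtho_range_ker_of_isIdempotentElem_of_norm_le {p : E →ₗ[𝕜] E}
    (hp : IsIdempotentElem p) (hnorm : ∀ x, ‖p x‖ ≤ ‖x‖) : p.range ⟂ p.ker := by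
  intro u hu
  refine mem_orthogonal_iff_forall_norm_le_norm_sub.2 fun w hw ↦ ?_
  have map_sub_eq : p (u - w) = u := by
    rw [map_sub, (LinearMap.IsIdempotentElem.mem_range_iff hp).1 hu, LinearMap.mem_ker.1 hw,
      sub_zero]
  simpa only [map_sub_eq] using hnorm (u - w)

theorem contractive_idempotent_isSelfAdjoint_general {p : E →ₗ[𝕜] E}
    (hp : IsIdempotentElem p) (hnorm : ∀ x, ‖p x‖ ≤ ‖x‖) : p.IsSymmetric :=
  (LinearMap.IsIdempotentElem.isSymmetric_iff_isOrtho_range_ker hp).2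
    (isOrtho_range_ker_of_isIdempotentElem_of_norm_le hp hnorm)

end InnerProductSpace

/-- Every contractive idempotent on a complex Hilbert space is self-adjoint,
i.e. an orthogonal projection. -/
theorem contractive_idempotent_isSelfAdjoint {H : Type*} [NormedAddCommGroup H]
    [InnerProductSpace ℂ H] [CompleteSpace H]
    (p : H →L[ℂ] H) (hidem : p.comp p = p) (hnorm : ‖p‖ ≤ 1) :
    IsSelfAdjoint p :=
  p.isSelfAdjoint_iff_isSymmetric.2 <| contractive_idempotent_isSelfAdjoint_general
    (ContinuousLinearMap.IsIdempotentElem.toLinearMap hidem)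
    fun x ↦ (p.le_of_opNorm_le hnorm x).trans_eq (one_mul _)
end
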